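/- arXiv:1208.5858 — 3 statements merged into one kernel-verified Lean document; each statement's English description precedes it below -/
import Mathlib

section
/- Fix k ≥ 3 and let φ: ℂ[x_0,…,x_k,a,b,c,z] → ℂ[x_0,…,x_k,y_1,A,B,L,M] be the ℂ-algebra homomorphism fixing each x_i and sending a ↦ L·M, b ↦ −y_1, c ↦ A·B, z ↦ B·M. Let I_{W_0} be the ideal of ℂ[x_0,…,x_k,y_1,A,B,L,M] generated by the images under φ of the generators of I(k). Then the quotient ring ℂ[x_0,…,x_k,y_1,A,B,L,M]/I_{W_0} is an integral domain of Krull dimension 6; that is, the regular pullback W_0 ⊆ 𝔸^{k+6} of V(k) is an irreducible 6-fold. -/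
/-!
Idea of the proof. Put `T = ℂ[A,B,L,M]`, `a = LM`, `c = AB`, `z = BM`, `y = y₁ = -b`. Deleting rows
`p < q` of `N` leaves a block triangular matrix, so the minor is `a ^ p * c ^ (k - 1 - q)` times a
continuant (`det_skip`), and the generators of the ideal become
`y x_{i+1} = a x_i + c x_{i+2}` and `x_p x_q = x_{p+1} x_{q-1} + (polynomial in y over T)` for
`q ≥ p + 2` (`Rel`, `rel_iff`).

Read from left to right these relations are rewriting rules, and they show that the coordinate ring
of `W_0` is spanned over `T` by the normal monomials `x_i ^ s x_{i+1} ^ t`, `x_0 ^ s y ^ n`,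
`x_k ^ s y ^ n` (`straighten`). On the other hand, over the fraction field `K` of `T`, the relations
have a generic solution in the field of Hahn series over `K` with exponents in the
lexicographically ordered lattice `ℤ²`: `x_0` and `x_1` are the two coordinates, the exchange
relation determines `y`, and the recurrence determines the other `x_i` (`sol_cramer`). The valuations
of `x_0, …, x_k, y` in this solution are the rays of a complete unimodular fan whose
two-dimensional cones are exactly the pairs of variables occurring in normal monomials. Distinct
normal monomials therefore have distinct valuations (`mono_eq_of_wt_eq`, `mono_ord`) and are
linearly independent over `T`, so the coordinate ring embeds into a field
(`injective_of_normalSpan`) and is a domain.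

The same valuation argument shows that `x_0, x_1` are algebraically independent over `T`, while the
exchange relation and the recurrence make `y` and all `x_i` algebraic over `T[x_0, x_1]`. So the
transcendence degree over `ℂ` is `4 + 2` (`trdeg_eq_two`), and by Noether normalization it equals
the Krull dimension (`ringKrullDim_eq_trdeg`).
-/

/-!
The regular pullback `W_0 ⊆ 𝔸^{k+6}` of the polar variety `V(k)` under the
substitution `(a,b,c,z) ↦ (LM, -y₁, AB, BM)` (diptych case `[2,2]`).
-/

open MvPolynomial

noncomputable section

namespace Vk

/-- The ambient polynomial ring `ℂ[x_0,…,x_k,a,b,c,z]`. -/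
abbrev R (k : ℕ) : Type := MvPolynomial (Fin (k + 1) ⊕ Fin 4) ℂ

variable (k : ℕ)

/-- The variable `x_i` (junk value `0` out of range). -/
def xv (i : ℕ) : R k := if h : i ≤ k then X (Sum.inl ⟨i, by omega⟩) else 0

/-- The variable `a`. -/
def av : R k := X (Sum.inr 0)

/-- The variable `b`. -/
def bv : R k := X (Sum.inr 1)

/-- The variable `c`. -/
def cv : R k := X (Sum.inr 2)

/-- The variable `z`. -/
def zv : R k := X (Sum.inr 3)

/-- Entry of the `k × (k-2)` matrix `N`. -/
def Nent (r s : ℕ) : R k :=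
  if r = s then av k else if r = s + 1 then bv k else if r = s + 2 then cv k else 0

/-- Row reindexing after deleting rows `p` and `q` (`p < q`). -/
def skip (p q t : ℕ) : ℕ := if t < p then t else if t < q - 1 then t + 1 else t + 2

/-- The submatrix `N(p,q)` of `N` obtained by deleting rows `p` and `q`. -/
def Nsub (p q : ℕ) : Matrix (Fin (k - 2)) (Fin (k - 2)) (R k) :=
  fun t s => Nent k (skip p q (t : ℕ)) (s : ℕ)

/-- The generators of the ideal `I(k)`. -/
def Igen : Set (R k) :=
  { P | ∃ i : ℕ, 1 ≤ i ∧ i ≤ k - 1 ∧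
      P = av k * xv k (i - 1) + bv k * xv k i + cv k * xv k (i + 1) } ∪
  { P | ∃ p q : ℕ, p < q ∧ q ≤ k - 1 ∧
      P = xv k p * xv k (q + 1) - xv k (p + 1) * xv k q
          - (-1) ^ (q - p - 1) * zv k * (Nsub k p q).det }

/-- The target polynomial ring `ℂ[x_0,…,x_k,y₁,A,B,L,M]`:
`Sum.inr 0,1,2,3,4 = y₁, A, B, L, M`. -/
abbrev S (k : ℕ) : Type := MvPolynomial (Fin (k + 1) ⊕ Fin 5) ℂ

/-- The variable `y₁` of `S k`. -/
def y1 : S k := X (Sum.inr 0)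

/-- The variable `A` of `S k`. -/
def Av : S k := X (Sum.inr 1)

/-- The variable `B` of `S k`. -/
def Bv : S k := X (Sum.inr 2)

/-- The variable `L` of `S k`. -/
def Lv : S k := X (Sum.inr 3)

/-- The variable `M` of `S k`. -/
def Mv : S k := X (Sum.inr 4)

/-- The substitution homomorphism `φ` fixing each `x_i` and sending
`a ↦ LM`, `b ↦ -y₁`, `c ↦ AB`, `z ↦ BM`. -/
def φ : R k →ₐ[ℂ] S k :=
  aeval (fun j => match j with
    | Sum.inl i => X (Sum.inl i)
    | Sum.inr 0 => Lv k * Mv k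
    | Sum.inr 1 => -y1 k
    | Sum.inr 2 => Av k * Bv k
    | Sum.inr 3 => Bv k * Mv k)

/-- The ideal of the pullback `W_0`, generated by the `φ`-images of the
generators of `I(k)`. -/
def IW0 : Ideal (S k) := Ideal.span (φ k '' Igen k)

end Vk

/-! ### The maximal minors of `N` -/

namespace Vk

/-- The continuant of a tridiagonal matrix with diagonal `b` and off-diagonal products `e`
(a rescaled Chebyshev polynomial of the second kind). -/
def cont {R : Type*} [CommRing R] (b e : R) : ℕ → R
  | 0 => 1
  | 1 => b
  | n + 2 => b * cont b e (n + 1) - e * cont b e n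

lemma cont_neg {R : Type*} [CommRing R] (b e : R) (n : ℕ) :
    (-1) ^ n * cont (-b) e n = cont b e n := by
  induction n using Nat.twoStepInduction with
  | zero => simp [cont]
  | one => simp [cont]
  | more n h0 h1 =>
    rw [cont, cont, ← h0, ← h1]
    ring

/-- The entries of `N` over an arbitrary commutative ring. -/
def ent {R : Type*} [CommRing R] (a b c : R) (r s : ℕ) : R :=
  if r = s then a else if r = s + 1 then b else if r = s + 2 then c else 0

lemma ent_succ {R : Type*} [CommRing R] (a b c : R) (r s : ℕ) :
    ent a b c (r + 1) (s + 1) = ent a b c r s := by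
  simp [ent]

/-- Deleting the first and last row of `N` leaves a tridiagonal matrix. -/
lemma det_tridiagonal {R : Type*} [CommRing R] (a b c : R) (n : ℕ) :
    Matrix.det (Matrix.of fun t s : Fin n => ent a b c ((t : ℕ) + 1) (s : ℕ)) = cont b (a * c) n := by
  induction n using Nat.twoStepInduction with
  | zero => simp [cont]
  | one => simp [cont, ent]
  | more n h0 h1 =>
    rw [Matrix.det_succ_row_zero, Fin.sum_univ_succ, Fin.sum_univ_succ, Finset.sum_eq_zero]
    · have e1 : Matrix.submatrix (Matrix.of fun t s : Fin (n + 2) => ent a b c ((t : ℕ) + 1) (s : ℕ))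
          Fin.succ (Fin.succAbove 0) =
          (Matrix.of fun t s : Fin (n + 1) => ent a b c ((t : ℕ) + 1) (s : ℕ)) := by
        ext t s
        simp [Matrix.submatrix, ent_succ]
      have e2 : Matrix.det (Matrix.submatrix
          (Matrix.of fun t s : Fin (n + 2) => ent a b c ((t : ℕ) + 1) (s : ℕ))
          Fin.succ (Fin.succAbove (Fin.succ 0))) = c * cont b (a * c) n := by
        rw [Matrix.det_succ_column_zero, Fin.sum_univ_succ, Finset.sum_eq_zero]
        · rw [← h0]
          have : Matrix.submatrix (Matrix.submatrix
              (Matrix.of fun t s : Fin (n + 2) => ent a b c ((t : ℕ) + 1) (s : ℕ))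
              Fin.succ (Fin.succAbove (Fin.succ 0))) (Fin.succAbove 0) Fin.succ =
              (Matrix.of fun t s : Fin n => ent a b c ((t : ℕ) + 1) (s : ℕ)) := by
            ext t s
            simp only [Matrix.submatrix, Matrix.of_apply, Fin.succ_succAbove_succ,
              Fin.succAbove_zero, Fin.val_succ, ent_succ]
          rw [this]
          simp [Matrix.submatrix, ent]
        · intro i _
          simp [Matrix.submatrix, ent]
      rw [e1, e2, h1, cont]
      simp [ent]
      ring
    · intro i _
      simp [ent]

/-- The maximal minors of `N`: deleting rows `p < q` leaves a block triangular matrix with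
diagonal blocks a triangular one (`a` on the diagonal), a tridiagonal one, and a triangular one
(`c` on the diagonal). -/
lemma det_skip {R : Type*} [CommRing R] (a b c : R) (n : ℕ) : ∀ p q : ℕ, p < q → q ≤ n + 1 →
    Matrix.det (Matrix.of fun t s : Fin n => ent a b c (skip p q (t : ℕ)) (s : ℕ)) =
      a ^ p * cont b (a * c) (q - p - 1) * c ^ (n + 1 - q) := by
  induction n with
  | zero =>
    intro p q hpq hq
    obtain rfl : p = 0 := by omega
    obtain rfl : q = 1 := by omega
    simp [cont]
  | succ n ih =>
    intro p q hpq hq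
    rcases p with _ | p
    · rcases Nat.lt_or_ge q (n + 2) with hlt | hge
        -- the last row is `(0, …, 0, c)`
      · have hlast : skip 0 q n = n + 2 := by simp [skip]; omega
        rw [Matrix.det_succ_row _ (Fin.last n), Finset.sum_eq_single (Fin.last n)]
        · have e : Matrix.submatrix (Matrix.of fun t s : Fin (n + 1) =>
              ent a b c (skip 0 q (t : ℕ)) (s : ℕ)) (Fin.succAbove (Fin.last n))
              (Fin.succAbove (Fin.last n)) =
              (Matrix.of fun t s : Fin n => ent a b c (skip 0 q (t : ℕ)) (s : ℕ)) := by
            ext t s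
            simp [Matrix.submatrix]
          rw [e, ih 0 q hpq (by omega), show n + 1 + 1 - q = (n + 1 - q) + 1 by omega, pow_succ]
          simp only [Matrix.of_apply, Fin.val_last, hlast]
          simp [ent, ← two_mul, pow_mul]
          ring
        · intro j _ hj
          have : (j : ℕ) ≠ n := fun h => hj (Fin.ext h)
          have := j.2
          simp only [Matrix.of_apply, Fin.val_last, hlast]
          simp only [ent]
          rw [if_neg (by omega), if_neg (by omega), if_neg (by omega)]
          simp
        · simp
      · obtain rfl : q = n + 2 := by omega
        have := det_tridiagonal a b c (n + 1)
        simp only [pow_zero, one_mul, Nat.sub_zero, Nat.sub_self, mul_one]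
        rw [show n + 2 - 1 = n + 1 by omega, ← this]
        congr 1
        ext t s
        have := t.2
        simp only [Matrix.of_apply, skip]
        rw [if_neg (by omega), if_pos (by omega)]
      -- the first row is `(a, 0, …, 0)`
    · have hrow : skip (p + 1) q 0 = 0 := by simp [skip]
      rw [Matrix.det_succ_row_zero, Fin.sum_univ_succ, Finset.sum_eq_zero]
      · have e : Matrix.submatrix (Matrix.of fun t s : Fin (n + 1) =>
            ent a b c (skip (p + 1) q (t : ℕ)) (s : ℕ)) Fin.succ (Fin.succAbove 0) =
            (Matrix.of fun t s : Fin n => ent a b c (skip p (q - 1) (t : ℕ)) (s : ℕ)) := by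
          ext t s
          have : skip (p + 1) q ((t : ℕ) + 1) = skip p (q - 1) t + 1 := by
            simp only [skip]; split_ifs <;> omega
          simp [Matrix.submatrix, this, ent_succ]
        rw [e, ih p (q - 1) (by omega) (by omega)]
        simp only [Matrix.of_apply, Fin.val_zero, hrow]
        rw [show q - 1 - p - 1 = q - (p + 1) - 1 by omega,
          show n + 1 - (q - 1) = n + 1 + 1 - q by omega]
        simp [ent]
        ring
      · intro i _
        simp [hrow, ent]

end Vk

/-! ### Straightening to normal monomials -/

namespace Vk

/-- The relations defining the (pulled back) variety, written over a coefficient ring `T`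
containing `a`, `c`, `z`, for elements `x 0, …, x k` and `y = -b` of a `T`-algebra, with the minors
of `N` already evaluated. -/
structure Rel {T Q : Type*} [CommRing T] [CommRing Q] [Algebra T Q] (k : ℕ) (a c z : T)
    (x : ℕ → Q) (y : Q) : Prop where
  recurrence : ∀ i, i + 2 ≤ k → y * x (i + 1) = a • x i + c • x (i + 2)
  cramer : ∀ p m, p + m + 2 ≤ k → x p * x (p + m + 2) = x (p + 1) * x (p + m + 1) +
    (z * a ^ p * c ^ (k - 2 - p - m)) • cont y (algebraMap T Q (a * c)) m

/-- Labels of the normal monomials `x_i ^ s * x_{i+1} ^ t`, `x_0 ^ s * y ^ n`, `x_k ^ s * y ^ n`.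
The labelling is not injective. -/
inductive NIdx
  | cone (i s t : ℕ)
  | left (s n : ℕ)
  | right (s n : ℕ)

/-- In `x_i ^ s * x_{i+1} ^ t` only the indices `0 ≤ i < k` are allowed. -/
def NIdx.Valid (k : ℕ) : NIdx → Prop
  | .cone i _ _ => i < k
  | _ => True

/-- The normal monomial with a given label. -/
def NIdx.mono {Q : Type*} [CommRing Q] (k : ℕ) (x : ℕ → Q) (y : Q) : NIdx → Q
  | .cone i s t => x i ^ s * x (i + 1) ^ t
  | .left s n => x 0 ^ s * y ^ n
  | .right s n => x k ^ s * y ^ n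

/-- The `T`-span of the normal monomials. -/
def normalSpan (T : Type*) {Q : Type*} [CommRing T] [CommRing Q] [Algebra T Q] (k : ℕ)
    (x : ℕ → Q) (y : Q) : Submodule T Q :=
  Submodule.span T {u | ∃ j : NIdx, j.Valid k ∧ j.mono k x y = u}

section straighten

variable {T Q : Type*} [CommRing T] [CommRing Q] [Algebra T Q] {k : ℕ} {a c z : T}
    {x : ℕ → Q} {y : Q}

lemma mono_mem_normalSpan {j : NIdx} (hj : j.Valid k) : j.mono k x y ∈ normalSpan T k x y :=
  Submodule.subset_span ⟨j, hj, rfl⟩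

/-- The continuant is a polynomial in `y` over `T`. -/
lemma cont_mul_mem (P : Submodule T Q) (e : T) (u : Q) (h : ∀ n, y ^ n * u ∈ P) (m : ℕ) :
    ∀ n, y ^ n * cont y (algebraMap T Q e) m * u ∈ P := by
  induction m using Nat.twoStepInduction with
  | zero => intro n; simpa [cont] using h n
  | one => intro n; simpa [cont, pow_succ] using h (n + 1)
  | more m h0 h1 =>
    intro n
    have : y ^ n * cont y (algebraMap T Q e) (m + 2) * u =
        y ^ (n + 1) * cont y (algebraMap T Q e) (m + 1) * u -
          e • (y ^ n * cont y (algebraMap T Q e) m * u) := by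
      rw [cont, Algebra.smul_def]; ring
    rw [this]
    exact P.sub_mem (h1 _) (P.smul_mem _ (h0 _))

/-- A monomial to which no straightening rule applies is one of the normal monomials. -/
lemma normal_of_irreducible (hk : 2 ≤ k) (n : ℕ) (m : Multiset ℕ) (hm : ∀ i ∈ m, i ≤ k)
    (hgap : ∀ p ∈ m, ∀ q ∈ m, q < p + 2) (hy : n = 0 ∨ ∀ i ∈ m, i = 0 ∨ i = k) :
    y ^ n * (m.map x).prod ∈ normalSpan T k x y := by
  by_cases hall : ∀ i ∈ m, i = k
  · rw [Multiset.eq_replicate_card.mpr hall]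
    have := mono_mem_normalSpan (T := T) (k := k) (x := x) (y := y) (j := .right m.card n) trivial
    simpa [NIdx.mono, mul_comm] using this
  push Not at hall
  obtain ⟨j, hj, hjk⟩ := hall
  have hjlt : j < k := lt_of_le_of_ne (hm j hj) hjk
  rcases hy with rfl | hy
  · obtain ⟨i, hi, hmin⟩ := m.toFinset.exists_min_image id ⟨j, by simpa using hj⟩
    simp only [Multiset.mem_toFinset, id] at hi hmin
    have hik : i < k := lt_of_le_of_lt (hmin j hj) hjlt
    have hm' : m = Multiset.replicate (m.count i) i + Multiset.replicate (m.count (i + 1)) (i + 1) := by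
      ext r
      rw [Multiset.count_add, Multiset.count_replicate, Multiset.count_replicate]
      by_cases hr : r ∈ m
      · have h1 := hmin r hr
        have h2 := hgap i hi r hr
        rcases (by omega : r = i ∨ r = i + 1) with rfl | rfl <;> simp
      · rw [Multiset.count_eq_zero_of_notMem hr]
        split_ifs with h1 h2 h2
        · omega
        · subst h1; exact absurd hi hr
        · subst h2; simp [hr]
        · rfl
    rw [hm']
    have := mono_mem_normalSpan (T := T) (k := k) (x := x) (y := y)
      (j := .cone i (m.count i) (m.count (i + 1))) hik
    simpa [NIdx.mono] using this
  · have h0 : ∀ i ∈ m, i = 0 := by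
      obtain rfl : j = 0 := (hy j hj).resolve_right hjk
      intro i hi
      have := hgap 0 hj i hi
      rcases hy i hi with h | h <;> omega
    rw [Multiset.eq_replicate_card.mpr h0]
    have := mono_mem_normalSpan (T := T) (k := k) (x := x) (y := y) (j := .left m.card n) trivial
    simpa [NIdx.mono, mul_comm] using this

/-- Straightening. Both rewriting rules, `y x_{i+1} → a x_i + c x_{i+2}` and
`x_p x_q → x_{p+1} x_{q-1} + …` for `q ≥ p + 2`, decrease in lexicographic order the triple
consisting of the degree in the `x_i`, the exponent of `y`, and the sum of the squares of the
indices; the continuant terms omitted here have degree smaller by two in the `x_i`. -/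
theorem straighten (h : Rel k a c z x y) (hk : 2 ≤ k) (n : ℕ) (m : Multiset ℕ)
    (hm : ∀ i ∈ m, i ≤ k) : y ^ n * (m.map x).prod ∈ normalSpan T k x y := by
  by_cases hgap : ∀ p ∈ m, ∀ q ∈ m, q < p + 2
  · by_cases hy : n = 0 ∨ ∀ i ∈ m, i = 0 ∨ i = k
    · exact normal_of_irreducible hk n m hm hgap hy
    · push Not at hy
      obtain ⟨hn, i, hi, hi0, hik⟩ := hy
      obtain ⟨n, rfl⟩ := Nat.exists_eq_succ_of_ne_zero hn
      obtain ⟨i, rfl⟩ := Nat.exists_eq_succ_of_ne_zero hi0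
      obtain ⟨m, rfl⟩ := Multiset.exists_cons_of_mem hi
      have hik' : i + 2 ≤ k := by have := hm _ hi; simp only [Nat.succ_eq_add_one] at *; omega
      have hmm : ∀ j ∈ m, j ≤ k := fun j hj => hm j (Multiset.mem_cons_of_mem hj)
      have h1 := straighten h hk n (i ::ₘ m) (by
        intro j hj; rcases Multiset.mem_cons.mp hj with rfl | hj
        · omega
        · exact hmm j hj)
      have h2 := straighten h hk n ((i + 2) ::ₘ m) (by
        intro j hj; rcases Multiset.mem_cons.mp hj with rfl | hj
        · omega
        · exact hmm j hj)
      have e : y ^ (n + 1) * (((i + 1) ::ₘ m).map x).prod =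
          a • (y ^ n * ((i ::ₘ m).map x).prod) + c • (y ^ n * (((i + 2) ::ₘ m).map x).prod) := by
        simp only [Multiset.map_cons, Multiset.prod_cons]
        have := h.recurrence i hik'
        simp only [Algebra.smul_def] at *
        linear_combination y ^ n * (m.map x).prod * this
      rw [Nat.succ_eq_add_one, Nat.succ_eq_add_one, e]
      exact Submodule.add_mem _ (Submodule.smul_mem _ _ h1) (Submodule.smul_mem _ _ h2)
  · push Not at hgap
    obtain ⟨p, hp, q, hq, hpq⟩ := hgap
    obtain ⟨r, rfl⟩ := Nat.exists_eq_add_of_le hpq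
    obtain ⟨m, rfl⟩ := Multiset.exists_cons_of_mem hp
    rcases Multiset.mem_cons.mp hq with hq | hq
    · omega
    obtain ⟨m, rfl⟩ := Multiset.exists_cons_of_mem hq
    have hqk : p + r + 2 ≤ k := by
      have := hm (p + 2 + r) (by simp)
      omega
    have hmm : ∀ j ∈ m, j ≤ k := fun j hj =>
      hm j (Multiset.mem_cons_of_mem (Multiset.mem_cons_of_mem hj))
    have h1 := straighten h hk n ((p + 1) ::ₘ (p + r + 1) ::ₘ m) (by
      intro j hj
      rcases Multiset.mem_cons.mp hj with rfl | hj
      · omega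
      rcases Multiset.mem_cons.mp hj with rfl | hj
      · omega
      · exact hmm j hj)
    have h2 : ∀ n, y ^ n * (m.map x).prod ∈ normalSpan T k x y :=
      fun n => straighten h hk n m hmm
    have h3 := cont_mul_mem (normalSpan T k x y) (a * c) (m.map x).prod h2 r n
    have e : y ^ n * ((p ::ₘ (p + 2 + r) ::ₘ m).map x).prod =
        y ^ n * (((p + 1) ::ₘ (p + r + 1) ::ₘ m).map x).prod +
        (z * a ^ p * c ^ (k - 2 - p - r)) •
          (y ^ n * cont y (algebraMap T Q (a * c)) r * (m.map x).prod) := by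
      simp only [Multiset.map_cons, Multiset.prod_cons]
      have := h.cramer p r hqk
      rw [show p + 2 + r = p + r + 2 by omega]
      rw [Algebra.smul_def] at *
      linear_combination y ^ n * (m.map x).prod * this
    rw [e]
    exact Submodule.add_mem _ h1 (Submodule.smul_mem _ _ h3)
termination_by (m.card, n, (m.map (fun i => i ^ 2)).sum)
decreasing_by
  · subst_vars; simp [Prod.lex_def]
  · subst_vars; simp [Prod.lex_def]
  · subst_vars; simp [Prod.lex_def]; nlinarith
  · subst_vars; simp [Prod.lex_def]

end straighten

end Vk

/-! ### The fan of valuations -/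

namespace Vk

/-- The ray of the fan attached to `x_i`; it is the valuation of `x_i` in the generic solution
`XX` below. -/
def ray : ℕ → ℤ × ℤ
  | 0 => (1, 0)
  | i + 1 => (-(i : ℤ), 1 - (i : ℤ))

/-- The lattice point of a normal monomial; the ray of `y` is `(-1, -1)`. -/
def NIdx.wt (k : ℕ) : NIdx → ℤ × ℤ
  | .cone i s t => s • ray i + t • ray (i + 1)
  | .left s n => s • ray 0 + n • (-1, -1)
  | .right s n => s • ray k + n • (-1, -1)

section fan

variable {Q : Type*} [CommRing Q] {k : ℕ} (x : ℕ → Q) (y : Q)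

lemma cone_zero_cone_succ {s t j s' t' : ℕ}
    (h : (NIdx.cone 0 s t).wt k = (NIdx.cone (j + 1) s' t').wt k) :
    (NIdx.cone 0 s t).mono k x y = (NIdx.cone (j + 1) s' t').mono k x y := by
  simp [NIdx.wt, ray, Prod.ext_iff] at h
  obtain ⟨h1, h2⟩ := h
  have hs : s = 0 := by
    zify; nlinarith [mul_nonneg (Int.natCast_nonneg s') (Int.natCast_nonneg j),
      mul_nonneg (Int.natCast_nonneg t') (Int.natCast_nonneg j)]
  have ht' : t' = 0 := by
    zify; nlinarith [mul_nonneg (Int.natCast_nonneg s') (Int.natCast_nonneg j),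
      mul_nonneg (Int.natCast_nonneg t') (Int.natCast_nonneg j)]
  subst hs ht'
  simp at h1 h2
  rcases h1 with rfl | rfl
  · simp at h2
    simp [NIdx.mono, h2]
  · simp at h2
    subst h2
    simp [NIdx.mono]

lemma cone_succ_cone_succ {i s t j s' t' : ℕ} (hij : i ≤ j)
    (h : (NIdx.cone (i + 1) s t).wt k = (NIdx.cone (j + 1) s' t').wt k) :
    (NIdx.cone (i + 1) s t).mono k x y = (NIdx.cone (j + 1) s' t').mono k x y := by
  simp [NIdx.wt, ray, Prod.ext_iff] at h
  obtain ⟨h1, h2⟩ := h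
  obtain ⟨r, rfl⟩ := Nat.exists_eq_add_of_le hij
  push_cast at h1 h2
  have hd : (s : ℤ) + t = s' + t' := by linarith
  have he : (t : ℤ) = (s' + t') * r + t' := by nlinarith
  rcases r with _ | r
  · simp at he
    have : s = s' := by omega
    simp [NIdx.mono, this, he]
  · have hd' : ((s' : ℤ) + t') * r = 0 ∧ s = 0 ∧ t' = 0 := by
      push_cast at he
      have : 0 ≤ ((s' : ℤ) + t') * r := by positivity
      refine ⟨by nlinarith, ?_, ?_⟩ <;> zify <;> nlinarith
    obtain ⟨h3, rfl, rfl⟩ := hd'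
    simp at h3 hd
    rcases h3 with rfl | rfl
    · simp [NIdx.mono, hd]
    · simp [NIdx.mono, hd]

lemma right_cone_succ {i s t s' n : ℕ} (hi : i + 1 < k)
    (h : (NIdx.right s' n).wt k = (NIdx.cone (i + 1) s t).wt k) :
    (NIdx.right s' n).mono k x y = (NIdx.cone (i + 1) s t).mono k x y := by
  obtain ⟨r, rfl⟩ := Nat.exists_eq_add_of_lt hi
  simp [NIdx.wt, ray, Prod.ext_iff] at h
  obtain ⟨h1, h2⟩ := h
  have hd : (s : ℤ) + t = s' := by linarith
  have he : (t : ℤ) = s' * (r + 1) + n := by nlinarith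
  have : 0 ≤ (s' : ℤ) * r := by positivity
  have h3 : (s' : ℤ) * r = 0 ∧ s = 0 ∧ n = 0 := by
    refine ⟨by nlinarith, ?_, ?_⟩ <;> zify <;> nlinarith
  obtain ⟨h3, rfl, rfl⟩ := h3
  simp at h3 hd
  subst hd
  rcases h3 with rfl | rfl
  · simp [NIdx.mono]
  · simp [NIdx.mono]

/-- The rays of `x_0, x_1, …, x_k, y` span, in this cyclic order, a complete unimodular fan,
whose cones correspond to the types of normal monomials. Hence a normal monomial is determined by
its lattice point. -/
lemma mono_eq_of_wt_eq (hk : 2 ≤ k) {j j' : NIdx} (hj : j.Valid k) (hj' : j'.Valid k)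
    (h : j.wt k = j'.wt k) : j.mono k x y = j'.mono k x y := by
  have left_cone : ∀ s n i s' t', (NIdx.left s n).wt k = (NIdx.cone i s' t').wt k →
      (NIdx.left s n).mono k x y = (NIdx.cone i s' t').mono k x y := by
    intro s n i s' t' h
    rcases i with _ | i
    · simp [NIdx.wt, ray, Prod.ext_iff] at h
      obtain ⟨rfl, rfl, rfl⟩ : n = 0 ∧ t' = 0 ∧ s = s' := by omega
      simp [NIdx.mono]
    · simp [NIdx.wt, ray, Prod.ext_iff] at h
      obtain ⟨h1, h2⟩ := h
      have : (s : ℤ) + s' + t' = 0 := by linarith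
      obtain ⟨rfl, rfl, rfl⟩ : s = 0 ∧ s' = 0 ∧ t' = 0 := by omega
      simp at h1
      simp [NIdx.mono, h1]
  have left_right : ∀ s n s' n', (NIdx.left s n).wt k = (NIdx.right s' n').wt k →
      (NIdx.left s n).mono k x y = (NIdx.right s' n').mono k x y := by
    intro s n s' n' h
    obtain ⟨l, rfl⟩ := Nat.exists_eq_add_of_le' hk
    simp [NIdx.wt, ray, Prod.ext_iff] at h
    obtain ⟨h1, h2⟩ := h
    have : (s : ℤ) + s' = 0 := by linarith
    obtain ⟨rfl, rfl⟩ : s = 0 ∧ s' = 0 := by omega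
    simp at h1
    have : n = n' := by omega
    simp [NIdx.mono, this]
  have right_cone : ∀ s n i s' t', i < k → (NIdx.right s n).wt k = (NIdx.cone i s' t').wt k →
      (NIdx.right s n).mono k x y = (NIdx.cone i s' t').mono k x y := by
    intro s n i s' t' hi h
    rcases i with _ | i
    · obtain ⟨l, rfl⟩ := Nat.exists_eq_add_of_le' hk
      simp [NIdx.wt, ray, Prod.ext_iff] at h
      obtain ⟨h1, h2⟩ := h
      have : 0 ≤ (s : ℤ) * l := by positivity
      obtain ⟨rfl, rfl, rfl⟩ : s' = 0 ∧ s = 0 ∧ n = 0 := by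
        refine ⟨?_, ?_, ?_⟩ <;> zify <;> nlinarith
      obtain rfl : t' = 0 := by simpa using h2.symm
      simp [NIdx.mono]
    · exact right_cone_succ x y hi h
  rcases j with ⟨i, s, t⟩ | ⟨s, n⟩ | ⟨s, n⟩ <;> rcases j' with ⟨i', s', t'⟩ | ⟨s', n'⟩ | ⟨s', n'⟩
  · rcases i with _ | i <;> rcases i' with _ | i'
    · simp [NIdx.wt, ray, Prod.ext_iff] at h
      simp [NIdx.mono, h]
    · exact cone_zero_cone_succ x y h
    · exact (cone_zero_cone_succ x y h.symm).symm
    · rcases Nat.le_total i i' with hle | hle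
      · exact cone_succ_cone_succ x y hle h
      · exact (cone_succ_cone_succ x y hle h.symm).symm
  · exact (left_cone _ _ _ _ _ h.symm).symm
  · exact (right_cone _ _ _ _ _ hj h.symm).symm
  · exact left_cone _ _ _ _ _ h
  · simp [NIdx.wt, ray, Prod.ext_iff] at h
    obtain ⟨rfl, rfl⟩ : n = n' ∧ s = s' := by omega
    rfl
  · exact left_right _ _ _ _ h
  · exact right_cone _ _ _ _ _ hj' h
  · exact (left_right _ _ _ _ h.symm).symm
  · obtain ⟨l, rfl⟩ := Nat.exists_eq_add_of_le' hk
    simp [NIdx.wt, ray, Prod.ext_iff] at h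
    obtain ⟨h1, h2⟩ := h
    obtain rfl : s = s' := by zify; linarith
    obtain rfl : n = n' := by zify; linarith
    rfl

end fan

/-! ### Solutions of the relations in a field -/

section solution

variable {F : Type*} [Field F]

/-- The solution of the recurrence `a x_{n} - y x_{n+1} + c x_{n+2} = 0` with given initial
values. -/
def sol (a c y x0 x1 : F) : ℕ → F
  | 0 => x0
  | 1 => x1
  | n + 2 => (y * sol a c y x0 x1 (n + 1) - a * sol a c y x0 x1 n) / c

variable {a c z y x0 x1 : F} {k : ℕ}

lemma sol_rec (hc : c ≠ 0) (n : ℕ) :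
    c * sol a c y x0 x1 (n + 2) = y * sol a c y x0 x1 (n + 1) - a * sol a c y x0 x1 n := by
  rw [sol, mul_div_cancel₀ _ hc]

/-- The Cramer relations with `q = p + 1`. The single condition `hy` on the initial values is the
case `p = 0`, and the recurrence propagates it. -/
lemma sol_adjacent (hc : c ≠ 0) (hk : 2 ≤ k)
    (hy : y * x0 * x1 = a * x0 ^ 2 + c * x1 ^ 2 + z * c ^ (k - 1)) (n : ℕ) (hn : n + 2 ≤ k) :
    sol a c y x0 x1 n * sol a c y x0 x1 (n + 2) =
      sol a c y x0 x1 (n + 1) ^ 2 + z * a ^ n * c ^ (k - 2 - n) := by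
  induction n with
  | zero =>
    apply mul_left_cancel₀ hc
    have := sol_rec (a := a) (y := y) (x0 := x0) (x1 := x1) hc 0
    simp only [sol, pow_zero, Nat.sub_zero, zero_add] at *
    obtain ⟨l, rfl⟩ := Nat.exists_eq_add_of_le' hk
    simp only [Nat.add_sub_cancel, show l + 2 - 1 = l + 1 by omega, pow_succ] at *
    linear_combination x0 * this + hy
  | succ n ih =>
    apply mul_left_cancel₀ hc
    have h0 := sol_rec (a := a) (y := y) (x0 := x0) (x1 := x1) hc n
    have h1 := sol_rec (a := a) (y := y) (x0 := x0) (x1 := x1) hc (n + 1)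
    have ih := ih (by omega)
    rw [show k - 2 - n = (k - 2 - (n + 1)) + 1 by omega, pow_succ] at ih
    rw [pow_succ a]
    linear_combination sol a c y x0 x1 (n + 1) * h1 - sol a c y x0 x1 (n + 2) * h0 + a * ih

/-- All Cramer relations (with `q = p + m + 1`) follow from the adjacent ones by the recurrence,
which the continuants also satisfy. -/
lemma sol_cramer (hc : c ≠ 0) (hk : 2 ≤ k)
    (hy : y * x0 * x1 = a * x0 ^ 2 + c * x1 ^ 2 + z * c ^ (k - 1)) (p m : ℕ)
    (hm : p + m + 2 ≤ k) :
    sol a c y x0 x1 p * sol a c y x0 x1 (p + m + 2) =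
      sol a c y x0 x1 (p + 1) * sol a c y x0 x1 (p + m + 1) +
        z * a ^ p * c ^ (k - 2 - p - m) * cont y (a * c) m := by
  induction m using Nat.twoStepInduction with
  | zero =>
    have := sol_adjacent hc hk hy p hm
    simp only [cont, Nat.sub_zero, add_zero]
    linear_combination this
  | one =>
    apply mul_left_cancel₀ hc
    have h0 := sol_adjacent hc hk hy p (by omega)
    have h1 := sol_rec (a := a) (y := y) (x0 := x0) (x1 := x1) hc (p + 1)
    have h2 := sol_rec (a := a) (y := y) (x0 := x0) (x1 := x1) hc p
    rw [show k - 2 - p = (k - 2 - p - 1) + 1 by omega, pow_succ] at h0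
    simp only [cont, show p + 1 + 2 = p + 3 by omega, show p + 1 + 1 = p + 2 by omega] at *
    linear_combination sol a c y x0 x1 p * h1 + y * h0 - sol a c y x0 x1 (p + 1) * h2
  | more m h0 h1 =>
    apply mul_left_cancel₀ hc
    have h0 := h0 (by omega)
    have h1 := h1 (by omega)
    have r1 := sol_rec (a := a) (y := y) (x0 := x0) (x1 := x1) hc (p + m + 2)
    have r2 := sol_rec (a := a) (y := y) (x0 := x0) (x1 := x1) hc (p + m + 1)
    rw [show k - 2 - p - m = (k - 2 - p - (m + 2)) + 1 + 1 by omega, pow_succ, pow_succ] at h0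
    rw [show k - 2 - p - (m + 1) = (k - 2 - p - (m + 2)) + 1 by omega, pow_succ] at h1
    simp only [cont, show p + (m + 1) + 2 = p + m + 3 by omega,
      show p + (m + 1) + 1 = p + m + 2 by omega, show p + (m + 2) + 2 = p + m + 4 by omega,
      show p + (m + 2) + 1 = p + m + 3 by omega, show p + m + 2 + 2 = p + m + 4 by omega,
      show p + m + 2 + 1 = p + m + 3 by omega, show p + m + 1 + 1 = p + m + 2 by omega] at *
    linear_combination sol a c y x0 x1 p * r1 - sol a c y x0 x1 (p + 1) * r2 + y * h1 - a * h0

end solution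

end Vk

/-! ### The generic solution in a Hahn series field -/

namespace Vk


/-- The lattice `ℤ²`, ordered lexicographically, in which the valuations live. -/
abbrev Lat : Type := ℤ ×ₗ ℤ

section hahn

variable {K : Type*} [Field K]

lemma orderTop_C {t : K} (ht : t ≠ 0) : (HahnSeries.C t : HahnSeries Lat K).orderTop = ((0 : Lat) : WithTop Lat) := by
  rw [HahnSeries.C_apply, HahnSeries.orderTop_single ht]

lemma orderTop_pow' {u : HahnSeries Lat K} {g : Lat} (h : u.orderTop = (g : WithTop Lat)) (n : ℕ) :
    (u ^ n).orderTop = ((n • g : Lat) : WithTop Lat) := by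
  induction n with
  | zero => simp
  | succ n ih => rw [pow_succ, HahnSeries.orderTop_mul, ih, h, succ_nsmul]; rfl

lemma orderTop_mul' {u v : HahnSeries Lat K} {g h : Lat} (hu : u.orderTop = (g : WithTop Lat))
    (hv : v.orderTop = (h : WithTop Lat)) : (u * v).orderTop = ((g + h : Lat) : WithTop Lat) := by
  rw [HahnSeries.orderTop_mul, hu, hv]; rfl

lemma orderTop_of_mul {u v : HahnSeries Lat K} {g h l : Lat} (hu : u.orderTop = (g : WithTop Lat))
    (huv : (u * v).orderTop = (h : WithTop Lat)) (hl : g + l = h) :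
    v.orderTop = (l : WithTop Lat) := by
  rw [HahnSeries.orderTop_mul, hu] at huv
  cases hv : v.orderTop using WithTop.recTopCoe with
  | top =>
    rw [hv] at huv
    exact absurd huv (by simp)
  | coe r =>
    rw [hv] at huv
    have : g + r = h := WithTop.coe_injective huv
    have : r = l := by rw [← hl] at this; exact add_left_cancel this
    rw [this]

/-- Series with pairwise distinct valuations are linearly independent over the constants. -/
lemma linearIndependent_of_orderTop {T : Type*} [CommRing T] [Algebra T K]
    (hT : Function.Injective (algebraMap T K)) {J : Type*} (u : J → HahnSeries Lat K)
    (w : J → Lat) (hw : Function.Injective w) (hu : ∀ j, (u j).orderTop = (w j : WithTop Lat)) :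
    LinearIndependent T u := by
  classical
  rw [linearIndependent_iff']
  intro s f hf
  by_contra! hne
  obtain ⟨j₀, hj₀, hfj₀⟩ := hne
  -- among the terms with nonzero coefficient, that of least valuation cannot cancel
  obtain ⟨j, hj, hmin⟩ := (s.filter (fun j => f j ≠ 0)).exists_min_image w
    ⟨j₀, by simp [hj₀, hfj₀]⟩
  rw [Finset.mem_filter] at hj
  have hc := congrArg (fun v => HahnSeries.coeff v (w j)) hf
  simp only [HahnSeries.coeff_sum, HahnSeries.coeff_zero] at hc
  rw [Finset.sum_eq_single j] at hc
  · rw [HahnSeries.coeff_smul, Algebra.smul_def, mul_eq_zero] at hc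
    rcases hc with hc | hc
    · exact hj.2 (hT (by rw [hc, map_zero]))
    · exact HahnSeries.coeff_orderTop_ne (hu j) hc
  · intro i hi hij
    by_cases hfi : f i = 0
    · simp [hfi]
    · have hlt : w j < w i :=
        lt_of_le_of_ne (hmin i (by simp [hi, hfi])) (fun h => hij (hw h).symm)
      rw [HahnSeries.coeff_smul, HahnSeries.coeff_eq_zero_of_lt_orderTop (by rw [hu i]; exact_mod_cast hlt), smul_zero]
  · intro h
    exact absurd hj.1 h

variable (a c z : K) (k : ℕ)

/-- The value of `x_0` for the generic solution: the first coordinate of the Hahn series field. -/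
def X0 : HahnSeries Lat K := HahnSeries.single (toLex (1, 0)) 1

/-- The value of `x_1` for the generic solution: the second coordinate of the Hahn series field. -/
def X1 : HahnSeries Lat K := HahnSeries.single (toLex (0, 1)) 1

/-- The value of `y` for the generic solution, forced by `y x_1 = a x_0 + c x_2` and
`x_0 x_2 = x_1 ^ 2 + z c ^ (k - 2)`. -/
def Y : HahnSeries Lat K :=
  (HahnSeries.C a * X0 ^ 2 + HahnSeries.C c * X1 ^ 2 + HahnSeries.C z * HahnSeries.C c ^ (k - 1)) / (X0 * X1)

/-- The generic solution of the relations in the Hahn series field. -/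
def XX : ℕ → HahnSeries Lat K := sol (HahnSeries.C a) (HahnSeries.C c) (Y a c z k) X0 X1

lemma X0_ord : (X0 : HahnSeries Lat K).orderTop = ((toLex (1, 0) : Lat) : WithTop Lat) :=
  HahnSeries.orderTop_single one_ne_zero

lemma X1_ord : (X1 : HahnSeries Lat K).orderTop = ((toLex (0, 1) : Lat) : WithTop Lat) :=
  HahnSeries.orderTop_single one_ne_zero

lemma X0_ne : (X0 : HahnSeries Lat K) ≠ 0 := HahnSeries.single_ne_zero one_ne_zero

lemma X1_ne : (X1 : HahnSeries Lat K) ≠ 0 := HahnSeries.single_ne_zero one_ne_zero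

lemma Y_eq : Y a c z k * X0 * X1 = HahnSeries.C a * X0 ^ 2 + HahnSeries.C c * X1 ^ 2 + HahnSeries.C z * HahnSeries.C c ^ (k - 1) := by
  rw [mul_assoc, Y, div_mul_cancel₀]
  exact mul_ne_zero X0_ne X1_ne

variable {a c z k}

/-- In `x_n x_{n+2} = x_{n+1} ^ 2 + z a ^ n c ^ (k - 2 - n)` the constant term dominates for
`n = 0` and the square dominates for `n ≥ 1`. -/
lemma XX_ord (hc : c ≠ 0) (hz : z ≠ 0) (hk : 2 ≤ k) (n : ℕ) (hn : n ≤ k) :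
    (XX a c z k n).orderTop = ((toLex (ray n) : Lat) : WithTop Lat) := by
  have hC : (HahnSeries.C c : HahnSeries Lat K) ≠ 0 := HahnSeries.C_ne_zero hc
  have hconst : ∀ t : K, (0 : WithTop Lat) ≤ (HahnSeries.C t : HahnSeries Lat K).orderTop := fun t => by
    by_cases ht : t = 0
    · simp [ht]
    · rw [orderTop_C ht]; rfl
  have hadj := sol_adjacent (k := k) hC hk (Y_eq a c z k)
  match n with
  | 0 => exact X0_ord
  | 1 => exact X1_ord
  | 2 =>
    have h := hadj 0 hn
    refine orderTop_of_mul (X0_ord (K := K)) (h := 0) ?_ (by rfl)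
    change (sol (HahnSeries.C a) (HahnSeries.C c) (Y a c z k) X0 X1 0 * sol (HahnSeries.C a) (HahnSeries.C c) (Y a c z k) X0 X1 2).orderTop = _
    have e : (HahnSeries.C z * HahnSeries.C a ^ 0 * HahnSeries.C c ^ (k - 2 - 0) : HahnSeries Lat K).orderTop =
        ((0 : Lat) : WithTop Lat) := by
      rw [pow_zero, mul_one, ← map_pow, ← map_mul]
      exact orderTop_C (mul_ne_zero hz (pow_ne_zero _ hc))
    rw [h, HahnSeries.orderTop_add_eq_right, e]
    rw [e]
    change _ < (X1 ^ 2 : HahnSeries Lat K).orderTop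
    rw [orderTop_pow' X1_ord]
    exact WithTop.coe_lt_coe.mpr (by decide)
  | n + 3 =>
    have h1 := XX_ord hc hz hk (n + 1) (by omega)
    have h2 := XX_ord hc hz hk (n + 2) (by omega)
    have h := hadj (n + 1) hn
    have e2 := orderTop_pow' h2 2
    refine orderTop_of_mul h1 (h := 2 • toLex (ray (n + 2))) ?_ ?_
    · change (sol (HahnSeries.C a) (HahnSeries.C c) (Y a c z k) X0 X1 (n + 1) *
        sol (HahnSeries.C a) (HahnSeries.C c) (Y a c z k) X0 X1 (n + 3)).orderTop = _
      rw [h, HahnSeries.orderTop_add_eq_left]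
      · exact e2
      · change (XX a c z k (n + 2) ^ 2).orderTop < _
        rw [e2, ← map_pow, ← map_pow, ← map_mul, ← map_mul]
        refine lt_of_lt_of_le ?_ (hconst _)
        refine WithTop.coe_lt_coe.mpr ?_
        change toLex (2 • ray (n + 2)) < toLex (0, 0)
        rw [Prod.Lex.toLex_lt_toLex]
        left
        simp [ray]
        omega
    · change toLex (ray (n + 1) + ray (n + 3)) = toLex (2 • ray (n + 2))
      congr 1
      simp [ray, Prod.ext_iff]
      constructor <;> ring

/-- In the numerator of `Y` the constant term dominates. -/
lemma Y_ord (hc : c ≠ 0) (hz : z ≠ 0) :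
    (Y a c z k).orderTop = ((toLex (-1, -1) : Lat) : WithTop Lat) := by
  have h := Y_eq a c z k
  refine orderTop_of_mul (orderTop_mul' X0_ord X1_ord) (h := 0) ?_ (by rfl)
  rw [show X0 * X1 * Y a c z k = Y a c z k * X0 * X1 by ring, h]
  have e : (HahnSeries.C z * HahnSeries.C c ^ (k - 1) : HahnSeries Lat K).orderTop = ((0 : Lat) : WithTop Lat) := by
    rw [← map_pow, ← map_mul]
    exact orderTop_C (mul_ne_zero hz (pow_ne_zero _ hc))
  rw [HahnSeries.orderTop_add_eq_right, e]
  rw [e]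
  refine lt_of_lt_of_le (lt_min ?_ ?_) HahnSeries.min_orderTop_le_orderTop_add
  · by_cases ha : a = 0
    · simp [ha]
    rw [orderTop_mul' (orderTop_C ha) (orderTop_pow' X0_ord 2)]
    exact WithTop.coe_lt_coe.mpr (by decide)
  · rw [orderTop_mul' (orderTop_C hc) (orderTop_pow' X1_ord 2)]
    exact WithTop.coe_lt_coe.mpr (by decide)

lemma mono_ord (hc : c ≠ 0) (hz : z ≠ 0) (hk : 2 ≤ k) {j : NIdx} (hj : j.Valid k) :
    (j.mono k (XX a c z k) (Y a c z k)).orderTop =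
      ((toLex (j.wt k) : Lat) : WithTop Lat) := by
  rcases j with ⟨i, s, t⟩ | ⟨s, n⟩ | ⟨s, n⟩
  · have hi : i + 1 ≤ k := hj
    exact orderTop_mul' (orderTop_pow' (XX_ord hc hz hk i (by omega)) s)
      (orderTop_pow' (XX_ord hc hz hk (i + 1) hi) t)
  · exact orderTop_mul' (orderTop_pow' (XX_ord hc hz hk 0 (by omega)) s)
      (orderTop_pow' (Y_ord hc hz) n)
  · exact orderTop_mul' (orderTop_pow' (XX_ord hc hz hk k le_rfl) s)
      (orderTop_pow' (Y_ord hc hz) n)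

end hahn

/-- An algebra spanned by the normal monomials embeds in the Hahn series field, because distinct
normal monomials have distinct valuations there. -/
theorem injective_of_normalSpan {T K Q : Type*} [CommRing T] [Field K] [CommRing Q] [Algebra T K]
    [Algebra T Q] (hT : Function.Injective (algebraMap T K)) {k : ℕ} (hk : 2 ≤ k) {a c z : K}
    (hc : c ≠ 0) (hz : z ≠ 0) {x : ℕ → Q} {y : Q} (hspan : normalSpan T k x y = ⊤)
    (ψ : Q →ₐ[T] HahnSeries Lat K) (hx : ∀ i ≤ k, ψ (x i) = XX a c z k i)
    (hy : ψ y = Y a c z k) : Function.Injective ψ := by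
  classical
  have hψ : ∀ j : NIdx, j.Valid k → ψ (j.mono k x y) = j.mono k (XX a c z k) (Y a c z k) := by
    rintro (⟨i, s, t⟩ | ⟨s, n⟩ | ⟨s, n⟩) hj
    · have hi : i + 1 ≤ k := hj
      simp [NIdx.mono, hx i (by omega), hx (i + 1) hi]
    · simp [NIdx.mono, hx 0 (by omega), hy]
    · simp [NIdx.mono, hx k le_rfl, hy]
  -- reindex the normal monomials by their lattice points
  let J := {g : Lat // ∃ j : NIdx, j.Valid k ∧ toLex (j.wt k) = g}
  let e : J → Q := fun g => (Classical.choose g.2).mono k x y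
  have he : ∀ g : J, (ψ (e g)).orderTop = ((g : Lat) : WithTop Lat) := fun g => by
    have := Classical.choose_spec g.2
    rw [hψ _ this.1, mono_ord hc hz hk this.1, this.2]
  have hli : LinearIndependent T (ψ ∘ e) :=
    linearIndependent_of_orderTop hT _ (fun g : J => (g : Lat)) Subtype.val_injective he
  have htop : Submodule.span T (Set.range e) = ⊤ := by
    rw [eq_top_iff, ← hspan, normalSpan, Submodule.span_le]
    rintro _ ⟨j, hj, rfl⟩
    refine Submodule.subset_span ⟨⟨toLex (j.wt k), j, hj, rfl⟩, ?_⟩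
    have := Classical.choose_spec (⟨toLex (j.wt k), j, hj, rfl⟩ : J).2
    exact mono_eq_of_wt_eq x y hk this.1 hj (toLex.injective this.2)
  rw [injective_iff_map_eq_zero]
  intro u hu
  have hmem : u ∈ Submodule.span T (Set.range e) := htop ▸ Submodule.mem_top
  rw [Finsupp.mem_span_range_iff_exists_finsupp] at hmem
  obtain ⟨f, rfl⟩ := hmem
  have h0 : Finsupp.linearCombination T (ψ ∘ e) f = 0 := by
    rw [← hu, Finsupp.linearCombination_apply, Finsupp.sum, Finsupp.sum, map_sum]
    simp
  rw [linearIndependent_iff.mp hli f h0]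
  simp

end Vk

/-! ### Krull dimension and transcendence degree -/

namespace Vk

/-- Incomparability gives `≤`, lying over and going up give `≥`. -/
lemma ringKrullDim_eq_of_integral {A B : Type*} [CommRing A] [CommRing B] [IsDomain B] [Algebra A B]
    [Algebra.IsIntegral A B] (hinj : Function.Injective (algebraMap A B)) :
    ringKrullDim B = ringKrullDim A := by
  apply le_antisymm
  · refine Order.krullDim_le_of_strictMono (PrimeSpectrum.comap (algebraMap A B)) ?_
    intro I J hIJ
    exact Ideal.IsIntegral.comap_lt_comap (R := A) (I := I.asIdeal) (J := J.asIdeal) hIJ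
  · refine iSup_le fun l => ?_
    obtain ⟨P, hP, hPc⟩ := Ideal.exists_ideal_over_prime_of_isIntegral_of_isDomain (S := B) l.head.asIdeal
      (by rw [(RingHom.injective_iff_ker_eq_bot _).mp hinj]; exact bot_le)
    have : P.LiesOver l.head.asIdeal := ⟨hPc.symm⟩
    obtain ⟨L, hL, -⟩ := Ideal.exists_ltSeries_of_hasGoingUp l P
    rw [← hL]
    exact le_iSup (fun L : LTSeries (PrimeSpectrum B) => (L.length : WithBot ℕ∞)) L

/-- Noether normalization reduces the dimension of an affine domain to that of a polynomial ring
in as many variables as the transcendence degree. -/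
lemma ringKrullDim_eq_trdeg {Q : Type} [CommRing Q] [IsDomain Q] [Algebra ℂ Q]
    [Algebra.FiniteType ℂ Q] {n : ℕ} (h : Algebra.trdeg ℂ Q = n) : ringKrullDim Q = n := by
  obtain ⟨s, g, hg, hint⟩ := exists_integral_inj_algHom_of_fg ℂ Q
  let : Algebra (MvPolynomial (Fin s) ℂ) Q := g.toRingHom.toAlgebra
  have : IsScalarTower ℂ (MvPolynomial (Fin s) ℂ) Q :=
    IsScalarTower.of_algebraMap_eq fun r => (g.commutes r).symm
  have : Algebra.IsIntegral (MvPolynomial (Fin s) ℂ) Q := ⟨hint⟩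
  have : FaithfulSMul (MvPolynomial (Fin s) ℂ) Q :=
    (faithfulSMul_iff_algebraMap_injective _ _).mpr hg
  have h1 := trdeg_add_eq ℂ (MvPolynomial (Fin s) ℂ) (A := Q)
  rw [MvPolynomial.trdeg_of_isDomain, trdeg_eq_zero, h] at h1
  have hs : s = n := by simpa using h1
  subst hs
  rw [ringKrullDim_eq_of_integral (A := MvPolynomial (Fin s) ℂ) hg,
    MvPolynomial.ringKrullDim_of_isNoetherianRing]
  simp

/-- The monomials in the two coordinate series have distinct valuations. -/
lemma algebraicIndependent_X0_X1 {T K : Type*} [CommRing T] [Field K] [Algebra T K]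
    (hT : Function.Injective (algebraMap T K)) :
    AlgebraicIndependent T (![X0, X1] : Fin 2 → HahnSeries Lat K) := by
  have hli : LinearIndependent T
      (fun d : Fin 2 →₀ ℕ => (X0 ^ d 0 * X1 ^ d 1 : HahnSeries Lat K)) := by
    refine linearIndependent_of_orderTop hT _ (fun d => d 0 • toLex (1, 0) + d 1 • toLex (0, 1))
      ?_ fun d => orderTop_mul' (orderTop_pow' X0_ord _) (orderTop_pow' X1_ord _)
    intro d d' h
    have h' : ((d 0 : ℕ) • ((1, 0) : ℤ × ℤ) + (d 1 : ℕ) • ((0, 1) : ℤ × ℤ)) =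
        (d' 0 : ℕ) • ((1, 0) : ℤ × ℤ) + (d' 1 : ℕ) • ((0, 1) : ℤ × ℤ) := h
    simp only [Prod.ext_iff, Prod.fst_add, Prod.snd_add, Prod.smul_mk] at h'
    simp at h'
    ext i
    fin_cases i
    · exact h'.1
    · exact h'.2
  rw [algebraicIndependent_iff_injective_aeval, injective_iff_map_eq_zero]
  intro p hp
  have hsum : ∑ d ∈ p.support, p.coeff d • (X0 ^ d 0 * X1 ^ d 1 : HahnSeries Lat K) = 0 := by
    rw [← hp, MvPolynomial.aeval_def, MvPolynomial.eval₂_eq']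
    refine Finset.sum_congr rfl fun d _ => ?_
    rw [Algebra.smul_def, Fin.prod_univ_two]
    rfl
  ext d
  by_cases hd : d ∈ p.support
  · exact linearIndependent_iff'.mp hli p.support _ hsum d hd
  · simpa using hd

/-- Over the algebra generated by `x_0` and `x_1`, the exchange relation makes `y` algebraic and
then the recurrence makes every `x_i` algebraic. -/
lemma isAlgebraic_adjoin_pair {T Q : Type*} [CommRing T] [CommRing Q] [IsDomain Q] [Algebra T Q]
    (hTQ : Function.Injective (algebraMap T Q)) {k : ℕ} (hk : 2 ≤ k) {a c z : T} (hc : c ≠ 0)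
    {x : ℕ → Q} {y : Q} (h : Rel k a c z x y)
    (hgen : Algebra.adjoin T (insert y (x '' {i | i ≤ k})) = ⊤) (h0 : x 0 ≠ 0) (h1 : x 1 ≠ 0) :
    Algebra.IsAlgebraic (Algebra.adjoin T ({x 0, x 1} : Set Q)) Q := by
  set T' := Algebra.adjoin T ({x 0, x 1} : Set Q) with hT'
  have alg : ∀ u ∈ T', IsAlgebraic T' u := fun u hu => isAlgebraic_algebraMap (⟨u, hu⟩ : T')
  have m0 : x 0 ∈ T' := Algebra.subset_adjoin (by simp)
  have m1 : x 1 ∈ T' := Algebra.subset_adjoin (by simp)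
  -- `x_0 x_1 y = a x_0 ^ 2 + c x_1 ^ 2 + z c ^ (k - 1)`
  have hy : IsAlgebraic T' y := by
    refine IsAlgebraic.of_mul (mem_nonZeroDivisors_of_ne_zero (mul_ne_zero h0 h1))
      (alg _ (mul_mem m0 m1)) (alg _ ?_)
    have e1 := h.recurrence 0 hk
    have e2 := h.cramer 0 0 hk
    simp only [zero_add, cont] at e1 e2
    have : x 0 * x 1 * y =
        a • (x 0 * x 0) + c • (x 1 * x 1 + (z * a ^ 0 * c ^ (k - 2 - 0 - 0)) • 1) := by
      rw [← e2, mul_assoc, mul_comm (x 1), e1]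
      simp only [mul_add, mul_smul_comm]
    rw [this]
    exact add_mem (T'.smul_mem (mul_mem m0 m0) _)
      (T'.smul_mem (add_mem (mul_mem m1 m1) (T'.smul_mem (one_mem _) _)) _)
  have hc' : algebraMap T Q c ≠ 0 := fun e => hc (hTQ (by rw [e, map_zero]))
  have hx : ∀ i, i ≤ k → IsAlgebraic T' (x i) := by
    intro i
    induction i using Nat.strong_induction_on with
    | _ i ih =>
      intro hi
      match i, ih, hi with
      | 0, _, _ => exact alg _ m0
      | 1, _, _ => exact alg _ m1
      | i + 2, ih, hi =>
        refine IsAlgebraic.of_mul (mem_nonZeroDivisors_of_ne_zero hc')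
          (alg _ (T'.algebraMap_mem c)) ?_
        have e : algebraMap T Q c * x (i + 2) = y * x (i + 1) - algebraMap T Q a * x i := by
          rw [h.recurrence i hi, Algebra.smul_def, Algebra.smul_def]
          ring
        rw [e]
        exact (hy.mul (ih (i + 1) (by omega) (by omega))).sub
          ((alg _ (T'.algebraMap_mem a)).mul (ih i (by omega) (by omega)))
  have hle : Algebra.adjoin T (insert y (x '' {i | i ≤ k})) ≤
      (Subalgebra.algebraicClosure T' Q).restrictScalars T := by
    refine Algebra.adjoin_le ?_
    rintro u (rfl | ⟨i, hi, rfl⟩)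
    · exact hy
    · exact hx i hi
  exact ⟨fun u => hle (hgen ▸ Algebra.mem_top)⟩

/-- The elements `x_0, x_1` form a transcendence basis over the coefficient ring. -/
theorem trdeg_eq_two {T K Q : Type} [CommRing T] [Field K] [CommRing Q] [IsDomain Q] [Algebra T K]
    [Algebra T Q] (hT : Function.Injective (algebraMap T K)) {k : ℕ} (hk : 2 ≤ k) {a c z : T}
    (hc : c ≠ 0) {x : ℕ → Q} {y : Q} (h : Rel k a c z x y)
    (hgen : Algebra.adjoin T (insert y (x '' {i | i ≤ k})) = ⊤)
    (ψ : Q →ₐ[T] HahnSeries Lat K) (hψ : Function.Injective ψ) (hx0 : ψ (x 0) = X0)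
    (hx1 : ψ (x 1) = X1) : Algebra.trdeg T Q = 2 := by
  have : Nontrivial T := ⟨c, 0, hc⟩
  have hind : AlgebraicIndependent T ![x 0, x 1] := by
    rw [← AlgHom.algebraicIndependent_iff ψ hψ]
    have e : ψ ∘ ![x 0, x 1] = ![X0, X1] := by
      ext1 i; fin_cases i
      · exact hx0
      · exact hx1
    rw [e]
    exact algebraicIndependent_X0_X1 hT
  have h0 : x 0 ≠ 0 := fun e => X0_ne (K := K) (by rw [← hx0, e, map_zero])
  have h1 : x 1 ≠ 0 := fun e => X1_ne (K := K) (by rw [← hx1, e, map_zero])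
  have := isAlgebraic_adjoin_pair hind.algebraMap_injective hk hc h hgen h0 h1
  apply le_antisymm
  · refine (Algebra.IsAlgebraic.trdeg_le_cardinalMk T ({x 0, x 1} : Set Q)).trans ?_
    refine (Cardinal.mk_insert_le).trans ?_
    rw [Cardinal.mk_singleton, one_add_one_eq_two]
  · simpa using hind.cardinalMk_le_trdeg

end Vk

/-! ### The coordinate ring of `W_0` -/

namespace Vk

/-- By straightening, the normal monomials span the algebra generated by `y` and the `x_i`. -/
lemma normalSpan_eq_top {T Q : Type*} [CommRing T] [CommRing Q] [Algebra T Q] {k : ℕ}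
    {a c z : T} {x : ℕ → Q} {y : Q} (h : Rel k a c z x y) (hk : 2 ≤ k)
    (hgen : Algebra.adjoin T (insert y (x '' {i | i ≤ k})) = ⊤) : normalSpan T k x y = ⊤ := by
  rw [eq_top_iff, ← Algebra.top_toSubmodule, ← hgen, Algebra.adjoin_eq_span, Submodule.span_le]
  intro u hu
  have hform : ∃ (n : ℕ) (m : Multiset ℕ), (∀ i ∈ m, i ≤ k) ∧ u = y ^ n * (m.map x).prod := by
    induction hu using Submonoid.closure_induction with
    | mem u hu =>
      rcases hu with rfl | ⟨i, hi, rfl⟩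
      · exact ⟨1, 0, by simp, by simp⟩
      · exact ⟨0, {i}, by simpa using hi, by simp⟩
    | one => exact ⟨0, 0, by simp, by simp⟩
    | mul u v _ _ hu hv =>
      obtain ⟨n, m, hm, rfl⟩ := hu
      obtain ⟨n', m', hm', rfl⟩ := hv
      refine ⟨n + n', m + m', fun i hi => ?_, by simp; ring⟩
      rcases Multiset.mem_add.mp hi with hi | hi
      · exact hm i hi
      · exact hm' i hi
  obtain ⟨n, m, hm, rfl⟩ := hform
  exact straighten h hk n m hm

/-- A ring homomorphism with `b ↦ -y` kills the generators of `I(k)` if and only if the images of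
the `x_i` satisfy the relations `Rel`: the minors `N(p,q)` are `a ^ p * c ^ (k - 1 - q)` times
continuants. -/
lemma rel_iff {T Q : Type*} [CommRing T] [CommRing Q] [Algebra T Q] {k : ℕ} (hk : 2 ≤ k)
    {a c z : T} {y : Q} (f : R k →+* Q) (ha : f (av k) = algebraMap T Q a) (hb : f (bv k) = -y)
    (hc : f (cv k) = algebraMap T Q c) (hz : f (zv k) = algebraMap T Q z) :
    (∀ P ∈ Igen k, f P = 0) ↔ Rel k a c z (fun i => f (xv k i)) y := by
  have hrec : ∀ i, f (av k * xv k i + bv k * xv k (i + 1) + cv k * xv k (i + 2)) =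
      a • f (xv k i) + c • f (xv k (i + 2)) - y * f (xv k (i + 1)) := fun i => by
    simp only [map_add, map_mul, ha, hb, hc, Algebra.smul_def]
    ring
  have hdet : ∀ p m, p + m + 2 ≤ k → f (Nsub k p (p + m + 1)).det =
      algebraMap T Q a ^ p * cont (-y) (algebraMap T Q (a * c)) m *
        algebraMap T Q c ^ (k - 2 - p - m) := fun p m hm => by
    have hs := det_skip (algebraMap T Q a) (-y) (algebraMap T Q c) (k - 2) p (p + m + 1)
      (by omega) (by omega)
    rw [show p + m + 1 - p - 1 = m by omega,
      show k - 2 + 1 - (p + m + 1) = k - 2 - p - m by omega, ← map_mul] at hs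
    rw [← hs, RingHom.map_det]
    congr 1
    ext t s
    simp only [RingHom.mapMatrix_apply, Matrix.map_apply, Nsub, Nent, ent, Matrix.of_apply,
      apply_ite f, ha, hb, hc, map_zero]
  have hcra : ∀ p m, p + m + 2 ≤ k →
      f (xv k p * xv k (p + m + 1 + 1) - xv k (p + 1) * xv k (p + m + 1)
        - (-1) ^ (p + m + 1 - p - 1) * zv k * (Nsub k p (p + m + 1)).det) =
      f (xv k p) * f (xv k (p + m + 2)) - (f (xv k (p + 1)) * f (xv k (p + m + 1)) +
        (z * a ^ p * c ^ (k - 2 - p - m)) • cont y (algebraMap T Q (a * c)) m) :=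
    fun p m hm => by
      rw [map_sub, map_sub, map_mul, map_mul, map_mul, map_mul, hdet p m hm, hz, map_pow, map_neg,
        map_one, show p + m + 1 - p - 1 = m by omega,
        ← cont_neg y (algebraMap T Q (a * c)) m, Algebra.smul_def]
      simp only [map_mul, map_pow]
      ring
  constructor
  · intro h
    refine ⟨fun i hi => ?_, fun p m hm => ?_⟩
    · have := h _ (Or.inl ⟨i + 1, by omega, by omega, rfl⟩)
      rw [Nat.add_sub_cancel] at this
      exact (sub_eq_zero.mp ((hrec i).symm.trans this)).symm
    · have := h _ (Or.inr ⟨p, p + m + 1, by omega, by omega, rfl⟩)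
      exact sub_eq_zero.mp ((hcra p m hm).symm.trans this)
  · rintro h P (⟨i, hi, hi', rfl⟩ | ⟨p, q, hpq, hq, rfl⟩)
    · obtain ⟨i, rfl⟩ : ∃ j, i = j + 1 := ⟨i - 1, by omega⟩
      rw [Nat.add_sub_cancel]
      exact (hrec i).trans (sub_eq_zero.mpr (h.recurrence i (by omega)).symm)
    · obtain ⟨m, rfl⟩ : ∃ m, q = p + m + 1 := ⟨q - p - 1, by omega⟩
      exact (hcra p m (by omega)).trans (sub_eq_zero.mpr (h.cramer p m (by omega)))

/-- The coefficient ring `ℂ[A,B,L,M]`, with `X 0, X 1, X 2, X 3` standing for `A, B, L, M`. -/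
abbrev Coef : Type := MvPolynomial (Fin 4) ℂ

/-- `a = L * M`. -/
def ca : Coef := X 2 * X 3

/-- `c = A * B`. -/
def cc : Coef := X 0 * X 1

/-- `z = B * M`. -/
def cz : Coef := X 1 * X 3

lemma cc_ne : cc ≠ 0 := mul_ne_zero (X_ne_zero _) (X_ne_zero _)

lemma cz_ne : cz ≠ 0 := mul_ne_zero (X_ne_zero _) (X_ne_zero _)

/-- The polynomial ring `S k` as an algebra over the subring generated by `A, B, L, M`. -/
instance algCoef (k : ℕ) : Algebra Coef (S k) :=
  (rename fun j : Fin 4 => (Sum.inr j.succ : Fin (k + 1) ⊕ Fin 5)).toRingHom.toAlgebra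

lemma algebraMap_coef (k : ℕ) (t : Coef) : algebraMap Coef (S k) t =
    rename (fun j : Fin 4 => (Sum.inr j.succ : Fin (k + 1) ⊕ Fin 5)) t := rfl

instance towerCoef (k : ℕ) : IsScalarTower ℂ Coef (S k) :=
  IsScalarTower.of_algebraMap_eq fun r => by
    rw [algebraMap_coef, AlgHom.commutes]

section assembly

variable (k : ℕ)

lemma phi_xv {i : ℕ} (hi : i ≤ k) : φ k (xv k i) = X (Sum.inl ⟨i, by omega⟩) := by
  simp [φ, xv, hi]

lemma phi_av : φ k (av k) = algebraMap Coef (S k) ca := by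
  rw [algebraMap_coef, ca, map_mul, rename_X, rename_X]
  simp [φ, av, Lv, Mv]

lemma phi_bv : φ k (bv k) = -y1 k := by
  simp [φ, bv]

lemma phi_cv : φ k (cv k) = algebraMap Coef (S k) cc := by
  rw [algebraMap_coef, cc, map_mul, rename_X, rename_X]
  simp [φ, cv, Av, Bv]

lemma phi_zv : φ k (zv k) = algebraMap Coef (S k) cz := by
  rw [algebraMap_coef, cz, map_mul, rename_X, rename_X]
  simp [φ, zv, Bv, Mv]

/-- The coordinate ring of `W_0`. -/
abbrev CoordRing : Type := S k ⧸ IW0 k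

/-- The class of `x_i` in the coordinate ring (`0` for `i > k`). -/
def xq (i : ℕ) : CoordRing k := Ideal.Quotient.mk (IW0 k) (φ k (xv k i))

/-- The class of `y₁` in the coordinate ring. -/
def yq : CoordRing k := Ideal.Quotient.mk (IW0 k) (y1 k)

lemma rel_coordRing (hk : 2 ≤ k) : Rel k ca cc cz (xq k) (yq k) := by
  refine (rel_iff hk ((Ideal.Quotient.mk (IW0 k)).comp (φ k).toRingHom) ?_ ?_ ?_ ?_).mp ?_
  · exact congrArg _ (phi_av k)
  · exact (congrArg (Ideal.Quotient.mk (IW0 k)) (phi_bv k)).trans (map_neg _ _)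
  · exact congrArg _ (phi_cv k)
  · exact congrArg _ (phi_zv k)
  · intro P hP
    exact Ideal.Quotient.eq_zero_iff_mem.mpr (Ideal.subset_span ⟨P, hP, rfl⟩)

lemma adjoin_eq_top :
    Algebra.adjoin Coef (insert (yq k) (xq k '' {i | i ≤ k})) = ⊤ := by
  rw [eq_top_iff]
  rintro u -
  obtain ⟨P, rfl⟩ := Ideal.Quotient.mk_surjective u
  induction P using MvPolynomial.induction_on with
  | C r =>
    have : (C r : S k) = algebraMap Coef (S k) (C r) := by rw [algebraMap_coef, rename_C]
    rw [this]
    exact Subalgebra.algebraMap_mem _ (C r : Coef)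
  | add P P' hP hP' => rw [map_add]; exact add_mem hP hP'
  | mul_X P j hP =>
    rw [map_mul]
    refine mul_mem hP ?_
    rcases j with i | j
    · have hi : (i : ℕ) ≤ k := by omega
      refine Algebra.subset_adjoin (Or.inr ⟨i, hi, ?_⟩)
      rw [xq, phi_xv k hi]
    · induction j using Fin.cases with
      | zero => exact Algebra.subset_adjoin (Or.inl rfl)
      | succ j =>
        have : (X (Sum.inr j.succ) : S k) = algebraMap Coef (S k) (X j) := by
          rw [algebraMap_coef, rename_X]
        rw [this]
        exact Subalgebra.algebraMap_mem _ (X j : Coef)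

/-- The constants: the fraction field of `ℂ[A,B,L,M]`. -/
abbrev Kc : Type := FractionRing Coef

lemma coef_injective : Function.Injective (algebraMap Coef Kc) := IsFractionRing.injective _ _

lemma map_ne {t : Coef} (ht : t ≠ 0) : algebraMap Coef Kc t ≠ 0 := fun h =>
  ht (coef_injective (by rw [h, map_zero]))

/-- The generic value of `y₁` in the Hahn series field. -/
def yF : HahnSeries Lat Kc :=
  Y (algebraMap Coef Kc ca) (algebraMap Coef Kc cc) (algebraMap Coef Kc cz) k

/-- The generic value of `x_i` in the Hahn series field. -/
def xF : ℕ → HahnSeries Lat Kc :=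
  XX (algebraMap Coef Kc ca) (algebraMap Coef Kc cc) (algebraMap Coef Kc cz) k

/-- Evaluation of polynomials at the generic solution. -/
def evalF : S k →ₐ[Coef] HahnSeries Lat Kc :=
  { eval₂Hom ((algebraMap Coef (HahnSeries Lat Kc)).comp MvPolynomial.C)
      (Sum.elim (fun i : Fin (k + 1) => xF k i)
        (Fin.cons (yF k) fun j : Fin 4 => algebraMap Coef (HahnSeries Lat Kc) (X j))) with
    commutes' := by
      intro t
      rw [algebraMap_coef]
      change eval₂Hom _ _ _ = _
      induction t using MvPolynomial.induction_on with
      | C r => simp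
      | add p q hp hq => rw [map_add, map_add, map_add, hp, hq]
      | mul_X p j hp => rw [map_mul, map_mul, map_mul, hp]; simp }

lemma evalF_inl (i : Fin (k + 1)) : evalF k (X (Sum.inl i)) = xF k i := by
  simp [evalF]

lemma evalF_y1 : evalF k (y1 k) = yF k := by
  simp [evalF, y1]

lemma algebraMap_hahn (t : Coef) :
    algebraMap Coef (HahnSeries Lat Kc) t = HahnSeries.C (algebraMap Coef Kc t) :=
  HahnSeries.algebraMap_apply

/-- The generic solution lies on `W_0`. -/
lemma evalF_kills (hk : 2 ≤ k) : ∀ P ∈ IW0 k, evalF k P = 0 := by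
  have hC : (HahnSeries.C (algebraMap Coef Kc cc) : HahnSeries Lat Kc) ≠ 0 :=
    HahnSeries.C_ne_zero (map_ne cc_ne)
  have hrel : Rel k ca cc cz (fun i => evalF k (φ k (xv k i))) (yF k) := by
    have hx : ∀ i ≤ k, evalF k (φ k (xv k i)) = xF k i := fun i hi => by
      rw [phi_xv k hi, evalF_inl]
    refine ⟨fun i hi => ?_, fun p m hm => ?_⟩
    · rw [hx _ (by omega), hx _ (by omega), hx _ (by omega), Algebra.smul_def, Algebra.smul_def,
        algebraMap_hahn, algebraMap_hahn]
      have := sol_rec (a := HahnSeries.C (algebraMap Coef Kc ca)) (y := yF k) (x0 := X0)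
        (x1 := X1) hC i
      exact (sub_eq_iff_eq_add'.mp this.symm)
    · rw [hx _ (by omega), hx _ (by omega), hx _ (by omega), hx _ (by omega), Algebra.smul_def]
      simp only [map_mul, map_pow, algebraMap_hahn]
      exact sol_cramer hC hk (Y_eq _ _ _ k) p m hm
  have hgen := (rel_iff hk ((evalF k).toRingHom.comp (φ k).toRingHom)
    ((congrArg _ (phi_av k)).trans ((evalF k).commutes _))
    ((congrArg _ (phi_bv k)).trans ((map_neg _ _).trans (congrArg _ (evalF_y1 k))))
    ((congrArg _ (phi_cv k)).trans ((evalF k).commutes _))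
    ((congrArg _ (phi_zv k)).trans ((evalF k).commutes _))).mpr hrel
  have hle : IW0 k ≤ RingHom.ker (evalF k) := by
    rw [IW0, Ideal.span_le]
    rintro _ ⟨P, hP, rfl⟩
    exact hgen P hP
  exact hle

/-- The map from the coordinate ring to the Hahn series field given by the generic solution. -/
def embF (hk : 2 ≤ k) : CoordRing k →ₐ[Coef] HahnSeries Lat Kc :=
  Ideal.Quotient.liftₐ (IW0 k) (evalF k) (evalF_kills k hk)

lemma embF_mk (hk : 2 ≤ k) (P : S k) :
    embF k hk (Ideal.Quotient.mk (IW0 k) P) = evalF k P := rfl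

lemma embF_xq (hk : 2 ≤ k) {i : ℕ} (hi : i ≤ k) : embF k hk (xq k i) = xF k i := by
  rw [xq, embF_mk, phi_xv k hi, evalF_inl]

lemma embF_yq (hk : 2 ≤ k) : embF k hk (yq k) = yF k := by
  rw [yq, embF_mk, evalF_y1]

lemma embF_injective (hk : 2 ≤ k) : Function.Injective (embF k hk) :=
  injective_of_normalSpan coef_injective hk (map_ne cc_ne) (map_ne cz_ne)
    (normalSpan_eq_top (rel_coordRing k hk) hk (adjoin_eq_top k)) (embF k hk)
    (fun _ hi => embF_xq k hk hi) (embF_yq k hk)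

end assembly

end Vk

/-- For `k ≥ 3`, the regular pullback `W_0 ⊆ 𝔸^{k+6}` of `V(k)` under
`(a,b,c,z) ↦ (LM, -y₁, AB, BM)` is an irreducible 6-fold: the quotient ring
is an integral domain of Krull dimension `6`. -/
theorem W0_isDomain_and_dim_eq_six (k : ℕ) (hk : 3 ≤ k) :
    IsDomain (Vk.S k ⧸ Vk.IW0 k) ∧ ringKrullDim (Vk.S k ⧸ Vk.IW0 k) = 6 := by
  have hk2 : 2 ≤ k := by omega
  have hinj := Vk.embF_injective k hk2
  have hdom : IsDomain (Vk.S k ⧸ Vk.IW0 k) := hinj.isDomain (Vk.embF k hk2).toRingHom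
  refine ⟨hdom, ?_⟩
  have htwo : Algebra.trdeg Vk.Coef (Vk.S k ⧸ Vk.IW0 k) = 2 :=
    Vk.trdeg_eq_two Vk.coef_injective hk2 Vk.cc_ne (Vk.rel_coordRing k hk2)
      (Vk.adjoin_eq_top k) (Vk.embF k hk2) hinj (Vk.embF_xq k hk2 (by omega))
      (Vk.embF_xq k hk2 (by omega))
  have hT : Function.Injective (algebraMap Vk.Coef (Vk.S k ⧸ Vk.IW0 k)) := by
    intro s t h
    have := congrArg (Vk.embF k hk2) h
    rw [AlgHom.commutes, AlgHom.commutes, Vk.algebraMap_hahn, Vk.algebraMap_hahn] at this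
    exact Vk.coef_injective (HahnSeries.C_injective this)
  have : FaithfulSMul Vk.Coef (Vk.S k ⧸ Vk.IW0 k) :=
    (faithfulSMul_iff_algebraMap_injective _ _).mpr hT
  have htr := trdeg_add_eq ℂ Vk.Coef (A := Vk.S k ⧸ Vk.IW0 k)
  rw [htwo, MvPolynomial.trdeg_of_isDomain] at htr
  refine Vk.ringKrullDim_eq_trdeg (n := 6) ?_
  rw [← htr]
  simp
  norm_num
end
end

section
/- Fix k ≥ 3 and let φ: ℂ[x_0,…,x_k,a,b,c,z] → ℂ[x_0,…,x_k,y_1,A,B,L,M] be the ℂ-algebra homomorphism fixing each x_i and sending a ↦ L·M, b ↦ −y_1, c ↦ A·B, z ↦ B·M. Then the image under φ of every generator of I(k) (each recurrence relation a·x_{i−1} + b·x_i + c·x_{i+1} for 1 ≤ i ≤ k−1, and each Cramer relation x_p·x_{q+1} − x_{p+1}·x_q − (−1)^{q−p−1}·z·det N(p,q) for 0 ≤ p < q ≤ k−1) lies in the ideal (x_1, x_2, …, x_k, M) of ℂ[x_0,…,x_k,y_1,A,B,L,M]. Hence the codimension-one locus D_0 = (x_1 = ⋯ = x_k = M = 0)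 is contained in the pullback W_0 of V(k). -/
/-!
The regular pullback `W_0 ⊆ 𝔸^{k+6}` of the polar variety `V(k)` under the
substitution `(a,b,c,z) ↦ (LM, -y₁, AB, BM)` (diptych case `[2,2]`).
-/

open MvPolynomial

noncomputable section

/-! Every monomial of every generator of `I(k)` is divisible by `a`, by `z`, or by some `x_i` with
`i ≥ 1`. Since `φ a = LM` and `φ z = BM` are multiples of `M`, all these factors are mapped into
`(x_1, …, x_k, M)`; in particular the determinants in the Cramer relations play no role, as they
are multiplied by `z`. -/

namespace Vk

/-- The ideal `(x_1, …, x_k, M)` of the locus `D_0`. -/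
abbrev ID0 (k : ℕ) : Ideal (S k) :=
  Ideal.span ((Set.range (fun i : Fin k => (X (Sum.inl i.succ) : S k))) ∪ {Mv k})

lemma Mv_mem (k : ℕ) : Mv k ∈ ID0 k := Ideal.subset_span (Or.inr rfl)

lemma φ_av_mem (k : ℕ) : φ k (av k) ∈ ID0 k := by
  have h : φ k (av k) = Lv k * Mv k := by simp [φ, av]
  rw [h]
  exact Ideal.mul_mem_left _ _ (Mv_mem k)

lemma φ_zv_mem (k : ℕ) : φ k (zv k) ∈ ID0 k := by
  have h : φ k (zv k) = Bv k * Mv k := by simp [φ, zv]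
  rw [h]
  exact Ideal.mul_mem_left _ _ (Mv_mem k)

/-- No upper bound on `i` is needed, since `xv k i = 0` for `i > k`. -/
lemma φ_xv_succ_mem (k i : ℕ) : φ k (xv k (i + 1)) ∈ ID0 k := by
  by_cases h : i + 1 ≤ k
  · have e : φ k (xv k (i + 1)) = X (Sum.inl (Fin.succ ⟨i, h⟩)) := by
      simp [φ, xv, h]
    rw [e]
    exact Ideal.subset_span (Or.inl ⟨⟨i, h⟩, rfl⟩)
  · simp [xv, h]

end Vk

/-- For `k ≥ 3`, the `φ`-image of every generator of `I(k)` lies in the ideal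
`(x_1, …, x_k, M)`; hence the divisor `D_0 = (x_1 = ⋯ = x_k = M = 0)` is
contained in the pullback `W_0` of `V(k)`. -/
theorem D0_subset_W0 (k : ℕ) (hk : 3 ≤ k) :
    ∀ P ∈ Vk.Igen k, Vk.φ k P ∈ Ideal.span
      ((Set.range (fun i : Fin k => (X (Sum.inl i.succ) : Vk.S k))) ∪ {Vk.Mv k}) := by
  rintro P (⟨i, hi, -, rfl⟩ | ⟨p, q, hpq, -, rfl⟩)
  · obtain ⟨j, rfl⟩ := Nat.exists_eq_add_of_le' hi
    simp only [map_add, map_mul]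
    exact add_mem (add_mem (Ideal.mul_mem_right _ _ (Vk.φ_av_mem k))
      (Ideal.mul_mem_left _ _ (Vk.φ_xv_succ_mem k j)))
      (Ideal.mul_mem_left _ _ (Vk.φ_xv_succ_mem k (j + 1)))
  · simp only [map_sub, map_mul]
    exact sub_mem (sub_mem (Ideal.mul_mem_left _ _ (Vk.φ_xv_succ_mem k q))
      (Ideal.mul_mem_right _ _ (Vk.φ_xv_succ_mem k p)))
      (Ideal.mul_mem_right _ _ (Ideal.mul_mem_left _ _ (Vk.φ_zv_mem k)))
end
end

section
/- In the polynomial ring ℂ[u_1,…,u_4, v_1, v_2, s_1,…,s_4, a_1,…,a_4], let K be the ideal generated by the four polynomials u_1·u_3 − a_2·s_1·s_2·u_2 − a_4·s_3·s_4·u_4, u_2·u_4 − a_1·s_1·s_4·u_1 − a_3·s_2·s_3·u_3, s_1·v_1 − u_1·u_2 + a_3·a_4·s_2·s_3²·s_4, and s_2·v_2 − u_2·u_3 + a_1·a_4·s_1·s_3·s_4². Then s_1·s_2·(v_1·v_2 − a_2·u_2³ − a_1·a_3·a_4²·s_3³·s_4³) lies in K. -/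
/-!
Parallel unprojection of the key 10-fold `W ⊆ 𝔸¹⁶`: the bilinear equation
`v₁v₂ = a₂u₂³ + a₁a₃a₄²s₃³s₄³` holds after multiplication by `s₁s₂` modulo the
complete intersection and the two linear unprojection equations.
-/

open MvPolynomial

noncomputable section

namespace KeyW

/-- The polynomial ring `ℂ[u₁,…,u₄, v₁, v₂, s₁,…,s₄, a₁,…,a₄]`;
variables `0,…,3 = u₁,…,u₄`, `4,5 = v₁,v₂`, `6,…,9 = s₁,…,s₄`,
`10,…,13 = a₁,…,a₄`. -/
abbrev R : Type := MvPolynomial (Fin 14) ℂ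

def u1 : R := X 0
def u2 : R := X 1
def u3 : R := X 2
def u4 : R := X 3
def v1 : R := X 4
def v2 : R := X 5
def s1 : R := X 6
def s2 : R := X 7
def s3 : R := X 8
def s4 : R := X 9
def a1 : R := X 10
def a2 : R := X 11
def a3 : R := X 12
def a4 : R := X 13

/-- The ideal generated by the two complete intersection equations and the
linear unprojection equations for `v₁` and `v₂`. -/
def K : Ideal R := Ideal.span
  { u1 * u3 - a2 * s1 * s2 * u2 - a4 * s3 * s4 * u4,
    u2 * u4 - a1 * s1 * s4 * u1 - a3 * s2 * s3 * u3,
    s1 * v1 - u1 * u2 + a3 * a4 * s2 * s3 ^ 2 * s4,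
    s2 * v2 - u2 * u3 + a1 * a4 * s1 * s3 * s4 ^ 2 }

end KeyW

open KeyW in
/-- `s₁s₂ · (v₁v₂ - a₂u₂³ - a₁a₃a₄²s₃³s₄³)` lies in `K`. -/
theorem bilinear_equation_mem :
    s1 * s2 * (v1 * v2 - a2 * u2 ^ 3 - a1 * a3 * a4 ^ 2 * s3 ^ 3 * s4 ^ 3) ∈ K := by
  -- Multiplying the two linear equations gives
  -- `s₁s₂v₁v₂ ≡ (u₁u₂ - a₃a₄s₂s₃²s₄)(u₂u₃ - a₁a₄s₁s₃s₄²)`. In the expansion, replace `u₁u₃` by the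
  -- first generator and then `u₂u₄` by the second: the two cross terms cancel.
  have h1 : u1 * u3 - a2 * s1 * s2 * u2 - a4 * s3 * s4 * u4 ∈ K :=
    Ideal.subset_span (by simp)
  have h2 : u2 * u4 - a1 * s1 * s4 * u1 - a3 * s2 * s3 * u3 ∈ K :=
    Ideal.subset_span (by simp)
  have h3 : s1 * v1 - u1 * u2 + a3 * a4 * s2 * s3 ^ 2 * s4 ∈ K :=
    Ideal.subset_span (by simp)
  have h4 : s2 * v2 - u2 * u3 + a1 * a4 * s1 * s3 * s4 ^ 2 ∈ K :=
    Ideal.subset_span (by simp)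
  have h := K.add_mem
    (K.add_mem (K.mul_mem_left (u2 ^ 2) h1) (K.mul_mem_left (a4 * s3 * s4 * u2) h2))
    (K.add_mem (K.mul_mem_left (s2 * v2) h3)
      (K.mul_mem_left (u1 * u2 - a3 * a4 * s2 * s3 ^ 2 * s4) h4))
  convert h using 1
  ring
end
end
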